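/- Assume A·(1,a)ᵀ = λ·(1,a)ᵀ. Define g_A : ℝ³ → ℝ³ by g_A(x,y,t) = (a₁₁x + a₁₂y, a₂₁x + a₂₂y, t+1). Then for every s ∈ ℝ and every p ∈ ℝ³, φ_s(g_A(p)) = g_A(φ_s(p)); that is, the flow φ commutes with the deck transformation g_A of the hyperbolic torus. -/

import Mathlib

/-- The flow `φ_s(x,y,t) = (x + s·λᵗ, y + a·s·λᵗ, t)` on `ℝ³`. -/
noncomputable def phi (lam a : ℝ) (s : ℝ) (p : ℝ × ℝ × ℝ) : ℝ × ℝ × ℝ :=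
  (p.1 + s * lam ^ p.2.2, p.2.1 + a * s * lam ^ p.2.2, p.2.2)

/-- The deck transformation `g_A(x,y,t) = (a₁₁x + a₁₂y, a₂₁x + a₂₂y, t+1)` of the
hyperbolic torus. -/
def deckA (A : Matrix (Fin 2) (Fin 2) ℤ) (p : ℝ × ℝ × ℝ) : ℝ × ℝ × ℝ :=
  ((A 0 0 : ℝ) * p.1 + (A 0 1 : ℝ) * p.2.1,
   (A 1 0 : ℝ) * p.1 + (A 1 1 : ℝ) * p.2.1, p.2.2 + 1)

/-!
The time-`s` flow translates the point `(x, y, t)` horizontally by `s·λᵗ·(1, a)`. Conjugation by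
`g_A` applies `A` to a horizontal translation, so it multiplies this vector by the eigenvalue `λ`.
Since `g_A` also raises the height `t` by one, `λ` is exactly the factor by which the
translation grows.
-/

open Matrix

/-- The vector of `ℝ³` with horizontal part `v` in the `(x, y)`-plane and zero `t`-component. It
expresses both the displacement of a point under `phi` and the linear part of `deckA`. -/
def horizontal (v : Fin 2 → ℝ) : ℝ × ℝ × ℝ :=
  (v 0, v 1, 0)

theorem phi_eq_add_horizontal (lam a s : ℝ) (p : ℝ × ℝ × ℝ) :
    phi lam a s p = p + horizontal ((s * lam ^ p.2.2) • ![1, a]) := by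
  obtain ⟨x, y, t⟩ := p
  have second_coord : y + a * s * lam ^ t = y + s * lam ^ t * a := by ring
  simp [phi, horizontal, second_coord]

theorem deckA_add_horizontal (A : Matrix (Fin 2) (Fin 2) ℤ) (p : ℝ × ℝ × ℝ) (v : Fin 2 → ℝ) :
    deckA A (p + horizontal v) =
      deckA A p + horizontal (A.map (fun n : ℤ => (n : ℝ)) *ᵥ v) := by
  obtain ⟨x, y, t⟩ := p
  have row_add (i : Fin 2) : A i 0 * (x + v 0) + A i 1 * (y + v 1) =
      (A i 0 * x + A i 1 * y) + (A i 0 * v 0 + A i 1 * v 1) := by ring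
  simp [deckA, horizontal, mulVec, dotProduct, Fin.sum_univ_two, row_add]

theorem stmt3_general (A : Matrix (Fin 2) (Fin 2) ℤ) (lam a : ℝ) (hlam : 0 < lam)
    (heig : (A.map (fun n : ℤ => (n : ℝ))).mulVec ![1, a] = lam • ![1, a]) (s : ℝ) :
    Function.Commute (phi lam a s) (deckA A) := by
  intro p
  have displacement_deckA : (s * lam ^ (deckA A p).2.2) • ![1, a] =
      A.map (fun n : ℤ => (n : ℝ)) *ᵥ ((s * lam ^ p.2.2) • ![1, a]) := by
    calc (s * lam ^ (p.2.2 + 1)) • ![1, a]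
      _ = (s * lam ^ p.2.2) • lam • ![1, a] := by
        rw [Real.rpow_add_one hlam.ne', ← mul_assoc, mul_smul]
      _ = A.map (fun n : ℤ => (n : ℝ)) *ᵥ ((s * lam ^ p.2.2) • ![1, a]) := by
        rw [mulVec_smul, heig]
  rw [phi_eq_add_horizontal, phi_eq_add_horizontal, deckA_add_horizontal, displacement_deckA]

/-- If `A·(1,a)ᵀ = λ·(1,a)ᵀ`, then the flow `φ` commutes with the deck
transformation `g_A` of the hyperbolic torus: `φ_s(g_A(p)) = g_A(φ_s(p))` for all `s, p`. -/
theorem stmt3 (A : Matrix (Fin 2) (Fin 2) ℤ) (hdet : A.det = 1)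
    (lam a : ℝ) (hlam : 1 < lam)
    (heig : (A.map (fun n : ℤ => (n : ℝ))).mulVec ![1, a] = lam • ![1, a]) :
    ∀ (s : ℝ) (p : ℝ × ℝ × ℝ), phi lam a s (deckA A p) = deckA A (phi lam a s p) :=
  stmt3_general A lam a (zero_lt_one.trans hlam) heig
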